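/- arXiv:hep-th/0107047 — 2 statements merged into one kernel-verified Lean document; each statement's English description precedes it below -/
import Mathlib

section
/- For every L ≥ 1 and h⃗ = (h₀,…,h_{L−1}) ∈ (ℂ⁴)^L with h_j = (a_j,b_j,c_j,d_j), there exist operators T₀, T₂, …, T_{2⌊L/2⌋} on ⊗^Lℂ^N such that T_{h⃗}(x) = Σ_{j=0}^{⌊L/2⌋} T_{2j}·x^{2j} for all x ∈ ℂ (only even powers of x occur, of degree at most 2⌊L/2⌋), these coefficient operators commute pairwise (T_{2j}T_{2k} = T_{2k}T_{2j}), and T₀ = q^L·(∏_{j=0}^{L−1} a_j)·D + (∏_{j=0}^{L−1} d_j)·I, where D := q^{−L}·(Y ⊗ Y ⊗ ⋯ ⊗ Y) (the L-fold tensor product of Y). -/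
/-!
The argument is the quantum inverse scattering method.

*Commutativity.* `X`, `Y`, `Z` satisfy `Y X = ω X Y`, `Z Y = ω Y Z`, `Z X = ω X Z`, and these
three relations make `L_h(x)` satisfy `Ř (L(x) ⊗ L(y)) = (L(y) ⊗ L(x)) Ř` for a scalar six-vertex
matrix `Ř = Ř(x, y)` independent of `h` (`rtt_local`). Operators at different sites commute
(`emb_commute`), so the relation passes to the monodromy matrix (`rtt_list`). There is a scalar
matrix `Ř'` with `Ř' Ř = Ř Ř' = δ(x, y)`; taking traces gives
`δ(x, y) (T(x) T(y) - T(y) T(x)) = 0` (`trace_commute`). For each `y`, `δ(·, y)` is a nonzero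
polynomial, so comparing coefficients, first in `x` and then in `y`, shows that the coefficients of
`T` commute (`coeff_eq_zero`).

*Parity and degree.* Diagonal entries of `L_h(x)` are constant and off-diagonal ones are linear
in `x`, so the `(i, j)` entry of a product of `n` factors only involves the `x ^ k` with `k ≤ n` and
`k ≡ i + j` mod 2 (`prod_mem_parity`).

*Constant term.* `L_h(0)` is diagonal, hence so is the monodromy matrix at `0`.
-/

open Matrix Polynomial

noncomputable section

/-- The operator `Z` on `ℂ^N`: `(Zv)_k = ω^k v_k`. -/
def Zop (N : ℕ) (ω : ℂ) : Matrix (ZMod N) (ZMod N) ℂ :=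
  Matrix.diagonal fun k => ω ^ k.val

/-- The operator `X` on `ℂ^N`: `(Xv)_k = v_{k-1}`. -/
def Xop (N : ℕ) : Matrix (ZMod N) (ZMod N) ℂ :=
  Matrix.of fun k k' => if k' = k - 1 then 1 else 0

/-- The operator `Y := Z * X` on `ℂ^N`. -/
def Yop (N : ℕ) [NeZero N] (ω : ℂ) : Matrix (ZMod N) (ZMod N) ℂ :=
  Zop N ω * Xop N

/-- The `L`-operator `L_h(x)`, a 2×2 matrix of operators on `ℂ^N`, for
`h = (a,b,c,d) ∈ ℂ⁴`: first row `(aY, xbX)`, second row `(xcZ, d·I)`. -/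
def Lop (N : ℕ) [NeZero N] (ω : ℂ) (h : ℂ × ℂ × ℂ × ℂ) (x : ℂ) :
    Matrix (Fin 2) (Fin 2) (Matrix (ZMod N) (ZMod N) ℂ) :=
  Matrix.of
    ![![h.1 • Yop N ω, (x * h.2.1) • Xop N],
      ![(x * h.2.2.1) • Zop N ω, h.2.2.2 • (1 : Matrix (ZMod N) (ZMod N) ℂ)]]

/-- Embedding of an operator on `ℂ^N` as an operator on `⊗^L ℂ^N` acting on the `j`-th
tensor slot. -/
def emb (N L : ℕ) [NeZero N] [NeZero L] (j : ZMod L) (A : Matrix (ZMod N) (ZMod N) ℂ) :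
    Matrix (ZMod L → ZMod N) (ZMod L → ZMod N) ℂ :=
  Matrix.of fun k k' =>
    A (k j) (k' j) * ∏ i ∈ Finset.univ.erase j, (if k i = k' i then (1 : ℂ) else 0)

/-- The monodromy matrix `L_{h⃗}(x) = L_{h₀}(x) ⋯ L_{h_{L-1}}(x)`, a 2×2 matrix of
operators on `⊗^L ℂ^N`, the operator entries of the `j`-th factor acting on the
`j`-th tensor slot. -/
def mono (N L : ℕ) [NeZero N] [NeZero L] (ω : ℂ) (h : ZMod L → ℂ × ℂ × ℂ × ℂ) (x : ℂ) :
    Matrix (Fin 2) (Fin 2) (Matrix (ZMod L → ZMod N) (ZMod L → ZMod N) ℂ) :=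
  ((List.finRange L).map fun j =>
    (Lop N ω (h ((j : ℕ) : ZMod L)) x).map (emb N L ((j : ℕ) : ZMod L))).prod

/-- The transfer matrix `T_{h⃗}(x)`: the trace of the monodromy matrix over the 2×2
auxiliary indices. -/
def transfer (N L : ℕ) [NeZero N] [NeZero L] (ω : ℂ) (h : ZMod L → ℂ × ℂ × ℂ × ℂ)
    (x : ℂ) : Matrix (ZMod L → ZMod N) (ZMod L → ZMod N) ℂ :=
  mono N L ω h x 0 0 + mono N L ω h x 1 1

/-- The operator `D := q^{−L}·(Y ⊗ ⋯ ⊗ Y)` on `⊗^L ℂ^N`. -/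
def Dop (N L : ℕ) [NeZero N] [NeZero L] (ω q : ℂ) :
    Matrix (ZMod L → ZMod N) (ZMod L → ZMod N) ℂ :=
  (q ^ L)⁻¹ • ((List.finRange L).map fun j => emb N L ((j : ℕ) : ZMod L) (Yop N ω)).prod

/-! ### The `RTT` relation over an arbitrary algebra -/

section RTT

variable {O : Type*} [Ring O]

/-- The Kronecker product of two `2 × 2` operator matrices, the entry of the first factor being
multiplied on the left (Mathlib's lemmas on `Matrix.kronecker` need commuting entries). -/
def kron (A B : Matrix (Fin 2) (Fin 2) O) : Matrix (Fin 2 × Fin 2) (Fin 2 × Fin 2) O :=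
  Matrix.of fun p q => A p.1 q.1 * B p.2 q.2

lemma kron_mul (A A' B B' : Matrix (Fin 2) (Fin 2) O)
    (hc : ∀ i j k l, Commute (A' i j) (B k l)) :
    kron (A * A') (B * B') = kron A B * kron A' B' := by
  ext ⟨i, k⟩ ⟨j, l⟩
  simp only [kron, Matrix.of_apply, Matrix.mul_apply, Fintype.sum_prod_type, Finset.sum_mul_sum]
  refine Finset.sum_congr rfl fun s _ => Finset.sum_congr rfl fun t _ => ?_
  have := (hc s j k t).eq
  rw [mul_assoc, ← mul_assoc (A' s j), this]
  simp only [mul_assoc]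

lemma trace_kron (A B : Matrix (Fin 2) (Fin 2) O) :
    (kron A B).trace = (A 0 0 + A 1 1) * (B 0 0 + B 1 1) := by
  simp only [Matrix.trace, kron, Matrix.diag, Matrix.of_apply, Fintype.sum_prod_type,
    Fin.sum_univ_two]
  noncomm_ring

lemma commute_list_prod {ι : Type*} (l : List ι) (F : ι → Matrix (Fin 2) (Fin 2) O) (z : O)
    (hc : ∀ m ∈ l, ∀ i j, Commute (F m i j) z) (i j : Fin 2) :
    Commute ((l.map F).prod i j) z := by
  induction l generalizing i j with
  | nil =>
    simp only [List.map_nil, List.prod_nil, Matrix.one_apply]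
    split_ifs
    · exact Commute.one_left _
    · exact Commute.zero_left _
  | cons m l ih =>
    simp only [List.map_cons, List.prod_cons, Matrix.mul_apply]
    refine Commute.sum_left _ _ _ fun s _ => ?_
    exact (hc m (by simp) i s).mul_left (ih (fun m' hm' => hc m' (by simp [hm'])) s j)

variable [Algebra ℂ O]

/-- A `4 × 4` matrix of six-vertex shape: `r` at the two corners and the block
`!![p, s; t, p]` on the indices `(0,1)`, `(1,0)`. -/
def sixV (r p s t : ℂ) : Matrix (Fin 2 × Fin 2) (Fin 2 × Fin 2) ℂ :=
  Matrix.of fun a b =>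
    (!![!![r, 0; 0, 0], !![0, p; s, 0]; !![0, t; p, 0], !![0, 0; 0, r]] a.1 a.2) b.1 b.2

/-- The matrix `Ř(x, y)` intertwining `L(x) ⊗ L(y)` and `L(y) ⊗ L(x)`. -/
def Rmat (ω x y : ℂ) : Matrix (Fin 2 × Fin 2) (Fin 2 × Fin 2) ℂ :=
  sixV (ω * x ^ 2 - y ^ 2) (x * y * (ω - 1)) (x ^ 2 - y ^ 2) (ω * (x ^ 2 - y ^ 2))

/-- The scalar `Ř * Radj`: the corner entry of `Ř` times the determinant of its central block. -/
def delta (ω x y : ℂ) : ℂ :=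
  (ω * x ^ 2 - y ^ 2) * ((x * y * (ω - 1)) ^ 2 - ω * (x ^ 2 - y ^ 2) ^ 2)

/-- A polynomial multiple of the inverse of `Ř`. -/
def Radj (ω x y : ℂ) : Matrix (Fin 2 × Fin 2) (Fin 2 × Fin 2) ℂ :=
  sixV ((x * y * (ω - 1)) ^ 2 - ω * (x ^ 2 - y ^ 2) ^ 2)
    ((ω * x ^ 2 - y ^ 2) * (x * y * (ω - 1))) (-(ω * x ^ 2 - y ^ 2) * (x ^ 2 - y ^ 2))
    (-(ω * x ^ 2 - y ^ 2) * (ω * (x ^ 2 - y ^ 2)))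

lemma Radj_mul (ω x y : ℂ) : Radj ω x y * Rmat ω x y = delta ω x y • 1 := by
  ext ⟨i, k⟩ ⟨j, l⟩
  fin_cases i <;> fin_cases k <;> fin_cases j <;> fin_cases l <;>
    simp [Radj, Rmat, sixV, delta, Matrix.mul_apply, Fintype.sum_prod_type] <;>
    ring

lemma mul_Radj (ω x y : ℂ) : Rmat ω x y * Radj ω x y = delta ω x y • 1 := by
  ext ⟨i, k⟩ ⟨j, l⟩
  fin_cases i <;> fin_cases k <;> fin_cases j <;> fin_cases l <;>
    simp [Radj, Rmat, sixV, delta, Matrix.mul_apply, Fintype.sum_prod_type] <;>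
    ring

/-- A scalar matrix viewed as a matrix over the algebra `O`. -/
def sc (O : Type*) [Ring O] [Algebra ℂ O] {n : Type*} (R : Matrix n n ℂ) : Matrix n n O :=
  R.map (algebraMap ℂ O)

lemma sc_mul {n : Type*} [Fintype n] (R S : Matrix n n ℂ) : sc O (R * S) = sc O R * sc O S :=
  Matrix.map_mul

/-- Cyclicity of the trace holds over a noncommutative ring if one factor has central entries. -/
lemma trace_sc_mul {n : Type*} [Fintype n] (R : Matrix n n ℂ) (K : Matrix n n O) :
    (sc O R * K).trace = (K * sc O R).trace := by
  simp only [Matrix.trace, Matrix.diag, Matrix.mul_apply, sc, Matrix.map_apply]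
  rw [Finset.sum_comm]
  exact Finset.sum_congr rfl fun _ _ => Finset.sum_congr rfl fun _ _ => Algebra.commutes _ _

lemma sc_smul_one_mul {n : Type*} [Fintype n] [DecidableEq n] (c : ℂ) (K : Matrix n n O) :
    sc O (c • (1 : Matrix n n ℂ)) * K = c • K := by
  ext i j
  simp [sc, Matrix.mul_apply, Matrix.one_apply, ← Algebra.smul_def, ite_smul, -algebraMap_smul]

/-- The intertwining relation `Ř (A ⊗ B) = (B ⊗ A) Ř`. -/
def RTT (ω x y : ℂ) (A B : Matrix (Fin 2) (Fin 2) O) : Prop :=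
  sc O (Rmat ω x y) * kron A B = kron B A * sc O (Rmat ω x y)

lemma rtt_one (ω x y : ℂ) : RTT ω x y (1 : Matrix (Fin 2) (Fin 2) O) 1 := by
  have : kron (1 : Matrix (Fin 2) (Fin 2) O) 1 = 1 := by
    ext ⟨i, k⟩ ⟨j, l⟩
    simp [kron, Matrix.one_apply, Prod.ext_iff, ite_and]
    split_ifs <;> rfl
  simp [RTT, this]

/-- The intertwining relation is multiplicative when factors at different sites commute. -/
lemma rtt_mul {ω x y : ℂ} {A B A' B' : Matrix (Fin 2) (Fin 2) O} (h : RTT ω x y A B)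
    (h' : RTT ω x y A' B') (h1 : ∀ i j k l, Commute (A' i j) (B k l))
    (h2 : ∀ i j k l, Commute (B' i j) (A k l)) : RTT ω x y (A * A') (B * B') := by
  unfold RTT at *
  rw [kron_mul _ _ _ _ h1, kron_mul _ _ _ _ h2, ← mul_assoc, h, mul_assoc, h', mul_assoc]

lemma trace_commute {ω x y : ℂ} {A B : Matrix (Fin 2) (Fin 2) O} (h : RTT ω x y A B) :
    delta ω x y • ((A 0 0 + A 1 1) * (B 0 0 + B 1 1) - (B 0 0 + B 1 1) * (A 0 0 + A 1 1)) = 0 := by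
  have h1 : delta ω x y • kron A B = sc O (Radj ω x y) * (kron B A * sc O (Rmat ω x y)) := by
    rw [← sc_smul_one_mul, ← Radj_mul, sc_mul, mul_assoc, h]
  have h2 : delta ω x y • kron B A = sc O (Rmat ω x y) * sc O (Radj ω x y) * kron B A := by
    rw [← sc_smul_one_mul, ← mul_Radj, sc_mul]
  rw [smul_sub, sub_eq_zero, ← trace_kron, ← trace_kron, ← Matrix.trace_smul, ← Matrix.trace_smul,
    h1, h2, trace_sc_mul, mul_assoc, ← sc_mul, trace_sc_mul]

/-- The `L`-operator with `X`, `Y`, `Z` replaced by elements of an arbitrary algebra. -/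
def absL (X Y Z : O) (h : ℂ × ℂ × ℂ × ℂ) (x : ℂ) : Matrix (Fin 2) (Fin 2) O :=
  !![h.1 • Y, (x * h.2.1) • X; (x * h.2.2.1) • Z, h.2.2.2 • 1]

/-- The intertwining relation for a single site, which needs only the exchange relations of `X`,
`Y` and `Z`: each of the sixteen entries reduces to a polynomial identity in `ω`, `x`, `y`. -/
lemma rtt_local {X Y Z : O} {ω : ℂ} (hYX : Y * X = ω • (X * Y)) (hZY : Z * Y = ω • (Y * Z))
    (hZX : Z * X = ω • (X * Z)) (h : ℂ × ℂ × ℂ × ℂ) (x y : ℂ) :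
    RTT ω x y (absL X Y Z h x) (absL X Y Z h y) := by
  obtain ⟨a, b, c, d⟩ := h
  unfold RTT
  ext ⟨i, k⟩ ⟨j, l⟩
  fin_cases i <;> fin_cases k <;> fin_cases j <;> fin_cases l <;>
    simp [sc, Rmat, sixV, kron, absL, Matrix.mul_apply, Fintype.sum_prod_type,
      ← Algebra.commutes, ← Algebra.smul_def, hYX, hZY, hZX, smul_smul, -map_sub, -map_mul] <;>
    module

lemma rtt_list {ι : Type*} {ω x y : ℂ} (l : List ι) (hl : l.Nodup)
    (F G : ι → Matrix (Fin 2) (Fin 2) O) (h : ∀ m, RTT ω x y (F m) (G m))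
    (hc : ∀ m m', m ≠ m' → ∀ i j k l, Commute (F m i j) (G m' k l)) :
    RTT ω x y (l.map F).prod (l.map G).prod := by
  induction l with
  | nil => simpa using rtt_one ω x y
  | cons m l ih =>
    rw [List.nodup_cons] at hl
    have hne : ∀ m' ∈ l, m' ≠ m := fun m' hm' e => hl.1 (e ▸ hm')
    simp only [List.map_cons, List.prod_cons]
    refine rtt_mul (h m) (ih hl.2) ?_ ?_
    · intro i j k k'
      exact commute_list_prod l F _ (fun m' hm' i j => hc _ _ (hne m' hm') _ _ _ _) _ _
    · intro i j k k'
      exact commute_list_prod l G _ (fun m' hm' i j => (hc _ _ (hne m' hm').symm _ _ _ _).symm) _ _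

/-! ### Parity and degree -/

/-- Operator-valued polynomial functions of degree at most `n` all of whose monomials `x ^ k` have
the parity of `ε`. -/
def parity (O : Type*) [Ring O] [Algebra ℂ O] (n ε : ℕ) : Submodule ℂ (ℂ → O) :=
  Submodule.span ℂ {f | ∃ k A, k ≤ n ∧ Even (k + ε) ∧ f = fun x => x ^ k • A}

lemma mul_mem_parity {n ε m δ : ℕ} {g f : ℂ → O} (hg : g ∈ parity O m δ) (hf : f ∈ parity O n ε) :
    g * f ∈ parity O (m + n) (δ + ε) := by
  unfold parity at hg hf
  induction hg, hf using Submodule.span_induction₂ with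
  | mem_mem g f hg hf =>
    obtain ⟨k, A, hk, he, rfl⟩ := hg
    obtain ⟨k', A', hk', he', rfl⟩ := hf
    refine Submodule.subset_span ⟨k + k', A * A', by omega, by grind, ?_⟩
    funext x
    simp [pow_add, smul_smul, mul_comm]
  | zero_left => simp
  | zero_right => simp
  | add_left x y z _ _ _ h1 h2 => rw [add_mul]; exact add_mem h1 h2
  | add_right x y z _ _ _ h1 h2 => rw [mul_add]; exact add_mem h1 h2
  | smul_left r x y _ _ h => rw [smul_mul_assoc]; exact Submodule.smul_mem _ _ h
  | smul_right r x y _ _ h => rw [mul_smul_comm]; exact Submodule.smul_mem _ _ h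

lemma parity_congr {n ε ε' : ℕ} (h : Even (ε + ε')) : parity O n ε = parity O n ε' := by
  unfold parity
  congr 1
  ext f
  refine exists_congr fun k => exists_congr fun A => ?_
  have : Even (k + ε) ↔ Even (k + ε') := by grind
  rw [this]

lemma absL_mem_parity (X Y Z : O) (h : ℂ × ℂ × ℂ × ℂ) (i j : Fin 2) :
    (fun x => absL X Y Z h x i j) ∈ parity O 1 (i + j) := by
  fin_cases i <;> fin_cases j
  · exact Submodule.subset_span ⟨0, h.1 • Y, by simp, by simp, by simp [absL]⟩
  · exact Submodule.subset_span ⟨1, h.2.1 • X, by simp, by simp, by simp [absL, smul_smul]⟩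
  · exact Submodule.subset_span ⟨1, h.2.2.1 • Z, by simp, by simp, by simp [absL, smul_smul]⟩
  · exact Submodule.subset_span ⟨0, h.2.2.2 • 1, by simp, by simp, by simp [absL]⟩

lemma prod_mem_parity {ι : Type*} (l : List ι) (F : ι → ℂ → Matrix (Fin 2) (Fin 2) O)
    (hF : ∀ m (i j : Fin 2), (fun x => F m x i j) ∈ parity O 1 (i + j)) (i j : Fin 2) :
    (fun x => (l.map fun m => F m x).prod i j) ∈ parity O l.length (i + j) := by
  induction l generalizing i j with
  | nil =>
    simp only [List.map_nil, List.prod_nil, Matrix.one_apply, List.length_nil]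
    split_ifs with hij
    · subst hij
      exact Submodule.subset_span ⟨0, 1, by simp, by simp, by simp⟩
    · exact zero_mem _
  | cons m l ih =>
    have : (fun x => ((m :: l).map fun m => F m x).prod i j) =
        ∑ s, (fun x => F m x i s) * (fun x => (l.map fun m => F m x).prod s j) := by
      funext x
      simp [Matrix.mul_apply]
    rw [this]
    refine Submodule.sum_mem _ fun s _ => ?_
    have h1 := mul_mem_parity (hF m i s) (ih s j)
    rw [List.length_cons, add_comm l.length]
    rwa [parity_congr (ε' := (i + j : ℕ)) (by grind)] at h1

lemma exists_coeff {n : ℕ} {f : ℂ → O} (hf : f ∈ parity O n 0) :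
    ∃ T : ℕ → O, (∀ j, n / 2 < j → T j = 0) ∧
      ∀ x, f x = ∑ j ∈ Finset.range (n / 2 + 1), x ^ (2 * j) • T j := by
  unfold parity at hf
  induction hf using Submodule.span_induction with
  | mem f hf =>
    obtain ⟨k, A, hk, ⟨m, hm⟩, rfl⟩ := hf
    refine ⟨fun j => if j = m then A else 0, fun j hj => if_neg (by omega), fun x => ?_⟩
    have : k = 2 * m := by omega
    have hmem : m < n / 2 + 1 := by omega
    simp [smul_ite, hmem, this]
  | zero => exact ⟨0, by simp, by simp⟩
  | add f g _ _ hf hg =>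
    obtain ⟨T, hT, hT'⟩ := hf
    obtain ⟨S, hS, hS'⟩ := hg
    refine ⟨T + S, fun j hj => by simp [hT j hj, hS j hj], fun x => ?_⟩
    simp [hT', hS', Finset.sum_add_distrib]
  | smul c f _ hf =>
    obtain ⟨T, hT, hT'⟩ := hf
    refine ⟨c • T, fun j hj => by simp [hT j hj], fun x => ?_⟩
    simp [hT', Finset.smul_sum, smul_comm c]

end RTT

/-! ### Operators on the tensor product -/

section Tensor

variable {N L : ℕ} [NeZero L]

/-- The operator `⨂ᵢ F i` on `⊗^L ℂ^N`. -/
def tens (F : ZMod L → Matrix (ZMod N) (ZMod N) ℂ) :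
    Matrix (ZMod L → ZMod N) (ZMod L → ZMod N) ℂ :=
  Matrix.of fun k k' => ∏ i, F i (k i) (k' i)

lemma tens_one : tens (1 : ZMod L → Matrix (ZMod N) (ZMod N) ℂ) = 1 := by
  ext k k'
  simp only [tens, Matrix.of_apply, Pi.one_apply, Matrix.one_apply, funext_iff]
  rw [Finset.prod_ite_zero]
  simp

variable [NeZero N]

lemma tens_mul (F G : ZMod L → Matrix (ZMod N) (ZMod N) ℂ) :
    tens F * tens G = tens (F * G) := by
  ext k k'
  simp only [tens, Matrix.mul_apply, Matrix.of_apply, Pi.mul_apply, Finset.prod_univ_sum,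
    Finset.prod_mul_distrib, Fintype.piFinset_univ]

lemma emb_eq_tens (j : ZMod L) (A : Matrix (ZMod N) (ZMod N) ℂ) :
    emb N L j A = tens (Pi.mulSingle j A) := by
  ext k k'
  simp only [emb, tens, Matrix.of_apply]
  rw [← Finset.mul_prod_erase Finset.univ _ (Finset.mem_univ j), Pi.mulSingle_eq_same]
  congr 1
  refine Finset.prod_congr rfl fun i hi => ?_
  rw [Pi.mulSingle_eq_of_ne (Finset.ne_of_mem_erase hi), Matrix.one_apply]

lemma emb_mul (j : ZMod L) (A B : Matrix (ZMod N) (ZMod N) ℂ) :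
    emb N L j A * emb N L j B = emb N L j (A * B) := by
  simp only [emb_eq_tens, tens_mul, Pi.mulSingle_mul]

lemma emb_one (j : ZMod L) : emb N L j 1 = 1 := by
  rw [emb_eq_tens, Pi.mulSingle_one, tens_one]

lemma emb_smul (j : ZMod L) (c : ℂ) (A : Matrix (ZMod N) (ZMod N) ℂ) :
    emb N L j (c • A) = c • emb N L j A := by
  ext k k'
  simp [emb, mul_assoc]

lemma emb_commute {i j : ZMod L} (hij : i ≠ j) (A B : Matrix (ZMod N) (ZMod N) ℂ) :
    Commute (emb N L i A) (emb N L j B) := by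
  have := (Pi.mulSingle_commute
    (f := fun _ : ZMod L => Matrix (ZMod N) (ZMod N) ℂ) hij A B).eq
  simp only [Commute, SemiconjBy, emb_eq_tens, tens_mul, this]

lemma Zop_mul_Xop {ω : ℂ} (hω : ω ^ N = 1) : Zop N ω * Xop N = ω • (Xop N * Zop N ω) := by
  ext k k'
  simp only [Zop, Xop, Matrix.diagonal_mul, Matrix.mul_diagonal, Matrix.smul_apply,
    Matrix.of_apply, smul_eq_mul]
  split_ifs with hk
  · subst hk
    have h1 : ω ^ (k - 1 + 1 : ZMod N).val = ω ^ ((k - 1).val + 1) := by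
      rw [ZMod.val_add, ZMod.val_one_eq_one_mod, Nat.add_mod_mod, ← pow_eq_pow_mod _ hω]
    rw [sub_add_cancel] at h1
    rw [h1, pow_succ]
    ring
  · simp

lemma Lop_map_emb (ω : ℂ) (h : ℂ × ℂ × ℂ × ℂ) (x : ℂ) (j : ZMod L) :
    (Lop N ω h x).map (emb N L j) =
      absL (emb N L j (Xop N)) (emb N L j (Yop N ω)) (emb N L j (Zop N ω)) h x := by
  ext1 a b
  fin_cases a <;> fin_cases b <;> simp [Lop, absL, emb_smul, emb_one]

/-- The index `j` in the definition of `mono` is a natural number, the coercion of an element of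
`List.finRange L`; here the product is written over `Fin L`. -/
lemma mono_eq (ω : ℂ) (h : ZMod L → ℂ × ℂ × ℂ × ℂ) (x : ℂ) :
    mono N L ω h x = ((List.finRange L).map fun j : Fin L =>
      (Lop N ω (h ((j : ℕ) : ZMod L)) x).map (emb N L ((j : ℕ) : ZMod L))).prod := by
  simp only [mono, bind_pure_comp, List.map_eq_map, List.map_map, Function.comp_def]

lemma Dop_eq (ω q : ℂ) : Dop N L ω q = (q ^ L)⁻¹ •
    ((List.finRange L).map fun j : Fin L => emb N L ((j : ℕ) : ZMod L) (Yop N ω)).prod := by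
  simp only [Dop, bind_pure_comp, List.map_eq_map, List.map_map, Function.comp_def]

lemma site_bijective : Function.Bijective (fun j : Fin L => ((j : ℕ) : ZMod L)) := by
  rw [Fintype.bijective_iff_injective_and_card]
  refine ⟨fun a b hab => ?_, by simp [ZMod.card]⟩
  have := congrArg ZMod.val hab
  simp only [ZMod.val_natCast_of_lt a.2, ZMod.val_natCast_of_lt b.2] at this
  exact Fin.ext this

lemma rtt_mono {ω : ℂ} (hω : ω ^ N = 1) (h : ZMod L → ℂ × ℂ × ℂ × ℂ) (x y : ℂ) :
    RTT ω x y (mono N L ω h x) (mono N L ω h y) := by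
  have hZX := Zop_mul_Xop hω
  rw [mono_eq, mono_eq]
  refine rtt_list _ (List.nodup_finRange L) _ _ (fun m => ?_) fun m m' hm i j k l => ?_
  · rw [Lop_map_emb, Lop_map_emb]
    refine rtt_local ?_ ?_ ?_ _ _ _ <;> simp only [emb_mul, ← emb_smul] <;> congr 1
    · rw [Yop, hZX, Matrix.smul_mul, ← hZX, Matrix.mul_assoc]
    · rw [Yop, Matrix.mul_assoc, ← Matrix.mul_smul, ← hZX]
  · simp only [Matrix.map_apply]
    exact emb_commute (site_bijective.1.ne hm) _ _

lemma mono_zero (ω : ℂ) (h : ZMod L → ℂ × ℂ × ℂ × ℂ) (l : List (Fin L)) :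
    (l.map fun j : Fin L =>
        (Lop N ω (h ((j : ℕ) : ZMod L)) 0).map (emb N L ((j : ℕ) : ZMod L))).prod =
      !![(l.map fun j : Fin L => (h ((j : ℕ) : ZMod L)).1).prod •
          (l.map fun j : Fin L => emb N L ((j : ℕ) : ZMod L) (Yop N ω)).prod, 0;
        0, (l.map fun j : Fin L => (h ((j : ℕ) : ZMod L)).2.2.2).prod • 1] := by
  induction l with
  | nil => simp [Matrix.one_fin_two]
  | cons m l ih =>
    rw [List.map_cons, List.prod_cons, ih, Lop_map_emb, absL, Matrix.mul_fin_two]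
    simp [smul_smul, mul_comm]

lemma prod_site (f : ZMod L → ℂ) :
    ((List.finRange L).map fun j : Fin L => f ((j : ℕ) : ZMod L)).prod = ∏ j, f j := by
  rw [← Fin.prod_univ_def fun j : Fin L => f ((j : ℕ) : ZMod L)]
  exact Fintype.prod_bijective _ site_bijective _ _ fun _ => rfl

end Tensor

/-! ### Comparison of coefficients -/

/-- An even polynomial with matrix coefficients that vanishes after multiplication by a nonzero
scalar polynomial has zero coefficients. -/
lemma coeff_eq_zero {m : Type*} (d : ℂ[X]) (hd : d ≠ 0) (n : ℕ) (B : ℕ → Matrix m m ℂ)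
    (h : ∀ x, d.eval x • ∑ j ∈ Finset.range n, x ^ (2 * j) • B j = 0) :
    ∀ j < n, B j = 0 := by
  intro j hj
  ext k k'
  set P : ℂ[X] := ∑ j ∈ Finset.range n, Polynomial.monomial (2 * j) (B j k k') with hP
  have hdP : d * P = 0 := by
    refine Polynomial.funext fun x => ?_
    have := congrFun (congrFun (h x) k) k'
    simp only [Matrix.smul_apply, Matrix.sum_apply, smul_eq_mul, Matrix.zero_apply] at this
    simp only [Polynomial.eval_mul, Polynomial.eval_zero, hP, Polynomial.eval_finsetSum,
      Polynomial.eval_monomial]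
    rw [← this]
    congr 1
    exact Finset.sum_congr rfl fun _ _ => mul_comm _ _
  have hP0 := (mul_eq_zero.1 hdP).resolve_left hd
  have := congrArg (fun p => Polynomial.coeff p (2 * j)) hP0
  simpa [hP, Polynomial.finsetSum_coeff, Polynomial.coeff_monomial, hj] using this

/-- For fixed `y`, `delta ω x y` is a nonzero polynomial in `x`. -/
lemma exists_delta_poly {ω : ℂ} (hω : ω ≠ 0) (y : ℂ) :
    ∃ d : ℂ[X], d ≠ 0 ∧ ∀ x, d.eval x = delta ω x y := by
  refine ⟨(C ω * X ^ 2 - C (y ^ 2)) *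
    (X ^ 2 * C ((y * (ω - 1)) ^ 2) - C ω * (X ^ 2 - C (y ^ 2)) ^ 2), fun h0 => ?_,
    fun x => ?_⟩
  · by_cases hy : y = 0
    · have := congrArg (Polynomial.eval 1) h0
      simp [hy, hω] at this
    · have := congrArg (Polynomial.eval 0) h0
      simp [hy, hω] at this
  · simp only [eval_mul, eval_sub, eval_pow, eval_X, eval_C, delta]
    ring

/-- the transfer matrix is an even polynomial in `x` of degree at most
`2⌊L/2⌋` with pairwise commuting operator coefficients, whose constant term is
`T₀ = q^L (∏ a_j) D + (∏ d_j) I`. -/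
theorem transfer_even_polynomial (M L : ℕ) [NeZero L] (hM : 1 ≤ M) (ω : ℂ)
    (hω : IsPrimitiveRoot ω (2 * M + 1)) (h : ZMod L → ℂ × ℂ × ℂ × ℂ) :
    ∃ T : ℕ → Matrix (ZMod L → ZMod (2 * M + 1)) (ZMod L → ZMod (2 * M + 1)) ℂ,
      (∀ x : ℂ, transfer (2 * M + 1) L ω h x = ∑ j ∈ Finset.range (L / 2 + 1), x ^ (2 * j) • T j) ∧
      (∀ j k : ℕ, T j * T k = T k * T j) ∧
      T 0 = ((ω ^ (M + 1)) ^ L * ∏ j : ZMod L, (h j).1) • Dop (2 * M + 1) L ω (ω ^ (M + 1)) +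
        (∏ j : ZMod L, (h j).2.2.2) • 1 := by
  have hN : ω ^ (2 * M + 1) = 1 := hω.pow_eq_one
  have hω0 : ω ≠ 0 := hω.ne_zero (by omega)
  have hpar : (fun x => transfer (2 * M + 1) L ω h x) ∈ parity _ L 0 := by
    have hF := prod_mem_parity (List.finRange L) (fun j x =>
      (Lop (2 * M + 1) ω (h ((j : ℕ) : ZMod L)) x).map (emb (2 * M + 1) L ((j : ℕ) : ZMod L)))
      (fun m i j => by simp only [Lop_map_emb]; exact absL_mem_parity _ _ _ _ i j)
    simp only [← mono_eq] at hF
    rw [List.length_finRange] at hF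
    have h0 := hF 0 0
    have h1 := hF 1 1
    rw [parity_congr (ε' := 0) (by simp)] at h0 h1
    exact add_mem h0 h1
  obtain ⟨T, hT0, hT⟩ := exists_coeff hpar
  refine ⟨T, hT, ?_, ?_⟩
  · have hcomm : ∀ x y, delta ω x y • (transfer (2 * M + 1) L ω h x * transfer (2 * M + 1) L ω h y -
        transfer (2 * M + 1) L ω h y * transfer (2 * M + 1) L ω h x) = 0 :=
      fun x y => trace_commute (rtt_mono hN h x y)
    have step1 : ∀ y, ∀ j < L / 2 + 1, T j * transfer (2 * M + 1) L ω h y -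
        transfer (2 * M + 1) L ω h y * T j = 0 := by
      intro y
      obtain ⟨d, hd, hdx⟩ := exists_delta_poly hω0 y
      refine coeff_eq_zero d hd _ _ fun x => ?_
      rw [hdx, ← hcomm x y]
      congr 1
      simp only [hT x, Finset.sum_mul, Finset.mul_sum, smul_sub, Finset.sum_sub_distrib,
        smul_mul_assoc, mul_smul_comm]
    have step2 : ∀ j < L / 2 + 1, ∀ k < L / 2 + 1, T j * T k - T k * T j = 0 := by
      intro j hj
      refine coeff_eq_zero 1 one_ne_zero _ _ fun y => ?_
      rw [Polynomial.eval_one, one_smul, ← step1 y j hj]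
      simp only [hT y, Finset.sum_mul, Finset.mul_sum, smul_sub, Finset.sum_sub_distrib,
        smul_mul_assoc, mul_smul_comm]
    intro j k
    rcases lt_or_ge j (L / 2 + 1) with hj | hj
    · rcases lt_or_ge k (L / 2 + 1) with hk | hk
      · exact sub_eq_zero.1 (step2 j hj k hk)
      · simp [hT0 k hk]
    · simp [hT0 j hj]
  · have h0 : transfer (2 * M + 1) L ω h 0 = T 0 := by
      have := hT 0
      rw [Finset.sum_range_succ'] at this
      simpa using this
    have hq : (ω ^ (M + 1)) ^ L ≠ 0 := pow_ne_zero _ (pow_ne_zero _ hω0)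
    rw [← h0, transfer, mono_eq, mono_zero, prod_site fun j => (h j).1,
      prod_site fun j => (h j).2.2.2, Dop_eq, smul_smul, mul_right_comm, mul_inv_cancel₀ hq, one_mul]
    simp

end
end

section
/- (Baxter T-Q relation on the spectral curve) Let φ be a linear functional on ⊗^Lℂ^N and Λ : ℂ → ℂ a function such that φ∘T_{h⃗}(x) = Λ(x)·φ for all x ∈ ℂ. Define Q(p) := φ(|p⟩) for nondegenerate p ∈ C_{h⃗}. Then for every nondegenerate p = (x, ξ₀,…,ξ_{L−1}) ∈ C_{h⃗} such that τ₋(p) and τ₊(p) are also nondegenerate, Λ(x)·Q(p) = Δ₋(p)·Q(τ₋(p)) + Δ₊(p)·Q(τ₊(p)), where Δ₋(p) = ∏_{j=0}^{L−1}(d_j − xξ_{j+1}c_j) and Δ₊(p) = ∏_{j=0}^{L−1} ξ_j(a_jd_j − x²b_jc_j)/(ξ_{j+1}a_j − xb_j). -/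
/-!
The transfer matrix is applied to the product vector `|p⟩` componentwise. Since the `j`-th factor
of the monodromy acts only on the `j`-th tensor slot, the component at `k` of `T(x)|p⟩` is the
trace of an ordered product of *scalar* 2×2 matrices `U_j`, the entries of `U_j` being the
components at `k_j` of the entries of `L_{h_j}(x)` applied to `|p_j⟩` (`list_prod_mulVec_baxVec`).

The recursion defining `|p_j⟩` says exactly that `A_{ξ_j} U_j A_{ξ_{j+1}}⁻¹` has zero lower left
entry (`gaugeA_mul_siteU`). The gauge matrices cancel cyclically inside the trace, so the trace is
the product of the upper left entries plus the product of the lower right entries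
(`trace_prod_of_gauge`). These diagonal entries are the components of `|(τ₋p)_j⟩` and
`|(τ₊p)_j⟩`, up to the factors of `Δ₋` and `Δ₊` (`siteB_zero_zero`, `siteB_one_one`), because the
recursions of the shifted vectors differ from that of `|p_j⟩` by telescoping factors.
-/

open Matrix Polynomial

noncomputable section

/-- The spectral curve `C_{h⃗}`: the set of points `(x, ξ₀,…,ξ_{L−1})` with
`ξ_j^N (ξ_{j+1}^N x^N c_j^N − d_j^N) = (−1)^N (ξ_{j+1}^N a_j^N − x^N b_j^N)` for all `j`
(cyclically). -/
def onCurve (N L : ℕ) [NeZero L] (a b c d : ZMod L → ℂ) (x : ℂ) (ξ : ZMod L → ℂ) : Prop :=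
  ∀ j : ZMod L,
    ξ j ^ N * (ξ (j + 1) ^ N * x ^ N * c j ^ N - d j ^ N) =
      (-1 : ℂ) ^ N * (ξ (j + 1) ^ N * a j ^ N - x ^ N * b j ^ N)

/-- A point of the spectral curve is nondegenerate if `ξ_j ≠ 0`,
`ξ_{j+1}a_j − xb_j ≠ 0` and `ξ_{j+1}xc_jω^m − d_j ≠ 0` for all `j` and all `m ∈ ℤ/N`. -/
def nondeg (N L : ℕ) [NeZero L] (ω : ℂ) (a b c d : ZMod L → ℂ) (x : ℂ)
    (ξ : ZMod L → ℂ) : Prop :=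
  ∀ j : ZMod L, ξ j ≠ 0 ∧ ξ (j + 1) * a j - x * b j ≠ 0 ∧
    ∀ m : ZMod N, ξ (j + 1) * x * c j * ω ^ m.val - d j ≠ 0

/-- `v j` is the `j`-th local factor `|p_j⟩` of the Baxter vector at
`p = (x, ξ₀,…,ξ_{L−1})`: the vector with `⟨0|p_j⟩ = 1` and
`⟨m|p_j⟩ = ⟨m−1|p_j⟩·(ξ_{j+1}a_jω^m − xb_j)/(−ξ_j(ξ_{j+1}xc_jω^m − d_j))` for all `m`. -/
def isBaxterFamily (N L : ℕ) [NeZero L] (ω : ℂ) (a b c d : ZMod L → ℂ) (x : ℂ)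
    (ξ : ZMod L → ℂ) (v : ZMod L → ZMod N → ℂ) : Prop :=
  ∀ j : ZMod L, v j 0 = 1 ∧ ∀ m : ZMod N,
    v j m = v j (m - 1) *
      ((ξ (j + 1) * a j * ω ^ m.val - x * b j) /
        (-(ξ j) * (ξ (j + 1) * x * c j * ω ^ m.val - d j)))

/-- The Baxter vector `|p⟩ = |p₀⟩ ⊗ ⋯ ⊗ |p_{L−1}⟩ ∈ ⊗^L ℂ^N` assembled from the
local factors `v j = |p_j⟩`. -/
def baxVec (N L : ℕ) [NeZero L] (v : ZMod L → ZMod N → ℂ) : (ZMod L → ZMod N) → ℂ :=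
  fun k => ∏ j : ZMod L, v j (k j)

/-- The gauge matrix `A_ξ` with rows `(1, ξ−1)` and `(1, ξ)`. -/
def gaugeA (ξ : ℂ) : Matrix (Fin 2) (Fin 2) ℂ :=
  Matrix.of ![![1, ξ - 1], ![1, ξ]]

/-- A scalar 2×2 matrix viewed as a 2×2 matrix of operators on `⊗^L ℂ^N`. -/
def scal (N L : ℕ) [NeZero N] [NeZero L] (A : Matrix (Fin 2) (Fin 2) ℂ) :
    Matrix (Fin 2) (Fin 2) (Matrix (ZMod L → ZMod N) (ZMod L → ZMod N) ℂ) :=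
  A.map fun z => z • (1 : Matrix (ZMod L → ZMod N) (ZMod L → ZMod N) ℂ)

/-- The gauge-transformed monodromy matrix
`L̃_{h⃗}(x,ξ) = (A_{ξ₀}L_{h₀}(x)A_{ξ₁}⁻¹)⋯(A_{ξ_{L−1}}L_{h_{L−1}}(x)A_{ξ₀}⁻¹)`. -/
def gaugeMono (N L : ℕ) [NeZero N] [NeZero L] (ω : ℂ) (h : ZMod L → ℂ × ℂ × ℂ × ℂ)
    (x : ℂ) (ξ : ZMod L → ℂ) :
    Matrix (Fin 2) (Fin 2) (Matrix (ZMod L → ZMod N) (ZMod L → ZMod N) ℂ) :=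
  ((List.finRange L).map fun j =>
    scal N L (gaugeA (ξ ((j : ℕ) : ZMod L))) *
      (Lop N ω (h ((j : ℕ) : ZMod L)) x).map (emb N L ((j : ℕ) : ZMod L)) *
      scal N L (gaugeA (ξ (((j : ℕ) : ZMod L) + 1)))⁻¹).prod

/-- `Δ₋(p) = ∏_j (d_j − x ξ_{j+1} c_j)`. -/
def DeltaMinus (L : ℕ) [NeZero L] (c d : ZMod L → ℂ) (x : ℂ) (ξ : ZMod L → ℂ) : ℂ :=
  ∏ j : ZMod L, (d j - x * ξ (j + 1) * c j)

/-- `Δ₊(p) = ∏_j ξ_j (a_j d_j − x² b_j c_j)/(ξ_{j+1} a_j − x b_j)`. -/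
def DeltaPlus (L : ℕ) [NeZero L] (a b c d : ZMod L → ℂ) (x : ℂ) (ξ : ZMod L → ℂ) : ℂ :=
  ∏ j : ZMod L, ξ j * (a j * d j - x ^ 2 * b j * c j) / (ξ (j + 1) * a j - x * b j)

/-! ### Operators on the tensor product applied to product vectors -/

lemma emb_mulVec (N L : ℕ) [NeZero N] [NeZero L] (j : ZMod L)
    (A : Matrix (ZMod N) (ZMod N) ℂ) (w : (ZMod L → ZMod N) → ℂ) (k : ZMod L → ZMod N) :
    (emb N L j A).mulVec w k = ∑ m, A (k j) m * w (Function.update k j m) := by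
  classical
  symm
  rw [Matrix.mulVec, dotProduct]
  refine Fintype.sum_of_injective (fun m => Function.update k j m)
    (Function.update_injective k j) _ _ ?_ ?_
  · intro k' hk'
    have : ∃ i ∈ Finset.univ.erase j, k i ≠ k' i := by
      by_contra! h
      refine hk' ⟨k' j, ?_⟩
      funext i
      by_cases hi : i = j
      · subst hi; simp
      · simpa [hi] using h i (by simp [hi])
    obtain ⟨i, hi, hne⟩ := this
    simp only [emb, Matrix.of_apply]
    rw [Finset.prod_eq_zero hi (by simp [hne])]
    simp
  · intro m
    simp only [emb, Matrix.of_apply, Function.update_self]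
    rw [Finset.prod_eq_one]
    · simp
    · intro i hi
      rw [Function.update_of_ne (Finset.ne_of_mem_erase hi)]
      simp

/-- The scalar 2×2 matrix of the components at `m` of the entries of an operator-valued 2×2
matrix `A` applied to `v`. -/
def siteU (N : ℕ) [NeZero N] (A : Matrix (Fin 2) (Fin 2) (Matrix (ZMod N) (ZMod N) ℂ))
    (v : ZMod N → ℂ) (m : ZMod N) : Matrix (Fin 2) (Fin 2) ℂ :=
  Matrix.of fun s t => (A s t).mulVec v m

/-- Distinct factors act on distinct slots of a product vector, so an ordered product of
operator-valued matrices acts componentwise through a product of scalar matrices. -/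
lemma list_prod_mulVec_baxVec (N L : ℕ) [NeZero N] [NeZero L]
    (A : ZMod L → Matrix (Fin 2) (Fin 2) (Matrix (ZMod N) (ZMod N) ℂ))
    (v : ZMod L → ZMod N → ℂ) (l : List (ZMod L)) (hl : l.Nodup) (s t : Fin 2)
    (k : ZMod L → ZMod N) :
    ((l.map fun j => (A j).map (emb N L j)).prod s t).mulVec (baxVec N L v) k =
      (l.map fun j => siteU N (A j) (v j) (k j)).prod s t *
        ∏ i ∈ Finset.univ \ l.toFinset, v i (k i) := by
  classical
  induction l generalizing s k with
  | nil =>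
    by_cases h : s = t
    · subst h; simp [baxVec]
    · simp [h]
  | cons j l ih =>
    obtain ⟨hj, hl⟩ := List.nodup_cons.mp hl
    simp only [List.map_cons, List.prod_cons, Matrix.mul_apply, Matrix.sum_mulVec,
      Finset.sum_apply, ← Matrix.mulVec_mulVec, Matrix.map_apply, Finset.sum_mul]
    refine Finset.sum_congr rfl fun r _ => ?_
    rw [emb_mulVec]
    simp only [siteU, Matrix.of_apply, Matrix.mulVec, dotProduct, Finset.sum_mul] at ih ⊢
    refine Finset.sum_congr rfl fun m _ => ?_
    rw [ih hl]
    -- overwriting slot `j` does not affect the factors indexed by `l`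
    have h1 : (l.map fun i => Matrix.of fun s t =>
          ∑ x, A i s t (Function.update k j m i) x * v i x) =
        l.map fun i => Matrix.of fun s t => ∑ x, A i s t (k i) x * v i x := by
      refine List.map_congr_left fun i hi => ?_
      rw [Function.update_of_ne (by rintro rfl; exact hj hi)]
    have h2 : Finset.univ \ l.toFinset = insert j (Finset.univ \ (j :: l).toFinset) := by
      ext i
      by_cases hi : i = j
      · subst hi; simp [hj]
      · simp [hi]
    rw [h1, h2, Finset.prod_insert (by simp), Function.update_self,
      Finset.prod_congr rfl (g := fun i => v i (k i))]
    · ring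
    · intro i hi
      rw [Function.update_of_ne]
      rintro rfl
      simp at hi

/-! ### Cyclic cancellation of the gauge matrices -/

/-- If `A_j U_j = B_j A_{j+1}` with all `B_j` upper triangular, and `A_n = A_0` is invertible, the
trace of `U_0 ⋯ U_{n-1}` splits into the two diagonal products of the `B_j`. -/
lemma trace_prod_of_gauge (A U B : ℕ → Matrix (Fin 2) (Fin 2) ℂ) (n : ℕ)
    (h : ∀ j, A j * U j = B j * A (j + 1)) (hB : ∀ j, B j 1 0 = 0) (hA : A n = A 0)
    (hdet : IsUnit (A 0).det) :
    ((List.range n).map U).prod 0 0 + ((List.range n).map U).prod 1 1 =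
      ∏ j ∈ Finset.range n, B j 0 0 + ∏ j ∈ Finset.range n, B j 1 1 := by
  have h1 : ∀ n, A 0 * ((List.range n).map U).prod = ((List.range n).map B).prod * A n := by
    intro n
    induction n with
    | zero => simp
    | succ n ih =>
      simp only [List.range_succ, List.map_append, List.prod_append, List.map_singleton,
        List.prod_singleton]
      rw [← mul_assoc, ih, mul_assoc, h, mul_assoc]
  have h2 : ∀ n, ((List.range n).map B).prod 1 0 = 0 ∧
      ((List.range n).map B).prod 0 0 = ∏ j ∈ Finset.range n, B j 0 0 ∧
      ((List.range n).map B).prod 1 1 = ∏ j ∈ Finset.range n, B j 1 1 := by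
    intro n
    induction n with
    | zero => simp
    | succ n ih =>
      obtain ⟨i1, i2, i3⟩ := ih
      simp [List.range_succ, Matrix.mul_apply, Fin.sum_univ_two, i1, i2, i3, hB,
        Finset.prod_range_succ]
  have h3 : ((List.range n).map U).prod = (A 0)⁻¹ * (((List.range n).map B).prod * A 0) := by
    have := h1 n
    rw [hA] at this
    rw [← this, Matrix.nonsing_inv_mul_cancel_left _ _ hdet]
  have h4 : ((List.range n).map U).prod.trace = ((List.range n).map B).prod.trace := by
    rw [h3, Matrix.trace_mul_comm, mul_assoc, Matrix.mul_nonsing_inv _ hdet, mul_one]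
  rw [Matrix.trace_fin_two, Matrix.trace_fin_two] at h4
  rw [h4, (h2 n).2.1, (h2 n).2.2]

/-! ### The triangular form at one site -/

/-- The value of `A_ξ U A_{ξ'}⁻¹` for the scalar matrix `U` at one site, where `z = ω^m`,
`v1 = ⟨m|p_j⟩` and `v0 = ⟨m-1|p_j⟩`. The recursion relating `v0` and `v1` is already used to
put the zero in the lower left corner and to simplify the upper left entry. -/
def siteB (a b c d x ξ ξ' z v0 v1 : ℂ) : Matrix (Fin 2) (Fin 2) ℂ :=
  !![(d - x * c * ξ' * z) * v1,
      (1 - ξ') * (a * z * v0 + (ξ - 1) * (x * c * z * v1)) + x * b * v0 + (ξ - 1) * (d * v1);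
    0, a * z * v0 + ξ * x * c * z * v1]

lemma gaugeA_mul_siteU (N : ℕ) [NeZero N] (ω a b c d x ξ ξ' : ℂ) (v : ZMod N → ℂ) (m : ZMod N)
    (h : v m * (-ξ * (ξ' * x * c * ω ^ m.val - d)) =
      v (m - 1) * (ξ' * a * ω ^ m.val - x * b)) :
    gaugeA ξ * siteU N (Lop N ω (a, b, c, d) x) v m =
      siteB a b c d x ξ ξ' (ω ^ m.val) (v (m - 1)) (v m) * gaugeA ξ' := by
  have hX : (Xop N).mulVec v m = v (m - 1) := by
    simp [Xop, Matrix.mulVec, dotProduct]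
  have hZ : ∀ w : ZMod N → ℂ, (Zop N ω).mulVec w m = ω ^ m.val * w m := fun w => by
    simp [Zop, Matrix.mulVec_diagonal]
  have hY : (Yop N ω).mulVec v m = ω ^ m.val * v (m - 1) := by
    rw [Yop, ← Matrix.mulVec_mulVec, hZ, hX]
  ext s t
  fin_cases s <;> fin_cases t <;>
    simp [gaugeA, siteU, siteB, Lop, Matrix.mul_apply, Fin.sum_univ_two, Matrix.smul_mulVec,
      hX, hY, hZ]
  · linear_combination -h
  · linear_combination (1 - ξ') * h
  · ring
  · linear_combination h

/-! ### The recursions of the Baxter vectors at `p`, `τ₋p` and `τ₊p` -/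

section Site

variable {N : ℕ} [NeZero N] {ω a b c d x ξ ξ' : ℂ}

/-- A solution on `ℤ/N` of a two-term recursion of Baxter type vanishes nowhere, since a zero would
propagate around the cycle to `⟨0|p_j⟩ = 1`. -/
lemma ne_zero_of_cyclic_rec {v r : ZMod N → ℂ} (h0 : v 0 = 1)
    (h : ∀ m, v m = v (m - 1) * r m) (m : ZMod N) : v m ≠ 0 := by
  intro hm
  have key : ∀ n : ℕ, v (m + n) = 0 := by
    intro n
    induction n with
    | zero => simpa using hm
    | succ n ih =>
      rw [h, show m + ((n + 1 : ℕ) : ZMod N) - 1 = m + n by push_cast; ring, ih, zero_mul]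
  have := key (-m).val
  rw [ZMod.natCast_zmod_val] at this
  simp [h0] at this

lemma pow_val_eq (hω : ω ^ N = 1) (m : ZMod N) : ω ^ m.val = ω ^ (m - 1).val * ω := by
  have : m.val = ((m - 1).val + 1) % N := by
    rw [← ZMod.val_natCast]
    simp
  rw [this, ← pow_eq_pow_mod _ hω, pow_succ]

lemma zmod_induction {P : ZMod N → Prop} (h0 : P 0) (h : ∀ m, P (m - 1) → P m) (m : ZMod N) :
    P m := by
  have key : ∀ n : ℕ, P n := by
    intro n
    induction n with
    | zero => simpa using h0
    | succ n ih => exact h _ (by simpa using ih)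
  simpa using key m.val

/-- The upper left entry of the triangular form is the component of the vector shifted by `τ₋`,
up to the local factor of `Δ₋`. -/
lemma siteB_zero_zero {q : ℂ} (hq0 : q ≠ 0) (hq : q ^ 2 = ω) (hω : ω ^ N = 1)
    {v w : ZMod N → ℂ} (hv0 : v 0 = 1) (hw0 : w 0 = 1) (hξ : ξ ≠ 0)
    (hD : ∀ m : ZMod N, ξ' * x * c * ω ^ m.val - d ≠ 0)
    (hv : ∀ m, v m * (-ξ * (ξ' * x * c * ω ^ m.val - d)) =
      v (m - 1) * (ξ' * a * ω ^ m.val - x * b))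
    (hw : ∀ m, w m * (-(q⁻¹ * ξ) * (q⁻¹ * ξ' * (q⁻¹ * x) * c * ω ^ m.val - d)) =
      w (m - 1) * (q⁻¹ * ξ' * a * ω ^ m.val - q⁻¹ * x * b)) (m : ZMod N) :
    (d - x * c * ξ' * ω ^ m.val) * v m = (d - x * ξ' * c) * w m := by
  induction m using zmod_induction with
  | h0 => simp [hv0, hw0]; ring
  | h m ih =>
    have e := pow_val_eq hω m
    have hw' : w m * (-ξ * (ξ' * x * c * ω ^ (m - 1).val - d)) =
        w (m - 1) * (ξ' * a * ω ^ m.val - x * b) := by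
      have := hw m
      rw [show q⁻¹ * ξ' * (q⁻¹ * x) * c * ω ^ m.val = ξ' * x * c * ω ^ (m - 1).val by
        rw [e, ← hq]; field_simp] at this
      field_simp at this ⊢
      linear_combination this
    refine mul_left_cancel₀ (mul_ne_zero (neg_ne_zero.mpr hξ) (hD (m - 1))) ?_
    linear_combination (-(ξ' * x * c * ω ^ (m - 1).val - d)) * hv m -
      (d - x * ξ' * c) * hw' + (ξ' * a * ω ^ m.val - x * b) * ih

/-- The lower right entry of the triangular form is the component of the vector shifted by `τ₊`,
up to the local factor of `Δ₊`. -/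
lemma siteB_one_one {q : ℂ} (hq0 : q ≠ 0) (hq : q ^ 2 = ω) (hω : ω ^ N = 1)
    {v w : ZMod N → ℂ} (hv0 : v 0 = 1) (hw0 : w 0 = 1) (hvne : ∀ m, v m ≠ 0) (hξ : ξ ≠ 0)
    (hF : ξ' * a - x * b ≠ 0)
    (hD : ∀ m : ZMod N, ξ' * x * c * ω ^ m.val - d ≠ 0)
    (hv : ∀ m, v m * (-ξ * (ξ' * x * c * ω ^ m.val - d)) =
      v (m - 1) * (ξ' * a * ω ^ m.val - x * b))
    (hw : ∀ m, w m * (-(q⁻¹ * ξ) * (q⁻¹ * ξ' * (q * x) * c * ω ^ m.val - d)) =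
      w (m - 1) * (q⁻¹ * ξ' * a * ω ^ m.val - q * x * b)) (m : ZMod N) :
    a * ω ^ m.val * v (m - 1) + ξ * x * c * ω ^ m.val * v m =
      ξ * (a * d - x ^ 2 * b * c) / (ξ' * a - x * b) * w m := by
  -- the ratio of the shifted vector to the original one, in cleared form
  have key : ∀ m, w m * (ξ' * a * ω ^ m.val - x * b) =
      v m * ω ^ m.val * (ξ' * a - x * b) := by
    intro m
    induction m using zmod_induction with
    | h0 => simp [hv0, hw0]
    | h m ih =>
      have e := pow_val_eq hω m
      have hw' : w m * (-ξ * (ξ' * x * c * ω ^ m.val - d)) =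
          ω * (w (m - 1) * (ξ' * a * ω ^ (m - 1).val - x * b)) := by
        have := hw m
        rw [show q⁻¹ * ξ' * (q * x) * c * ω ^ m.val = ξ' * x * c * ω ^ m.val by
          field_simp] at this
        have h2 : w m * (-ξ * (ξ' * x * c * ω ^ m.val - d)) =
            w (m - 1) * (ξ' * a * ω ^ m.val - q ^ 2 * x * b) := by
          field_simp at this ⊢
          linear_combination this
        rw [h2, hq, e]; ring
      rw [ih] at hw'
      refine mul_left_cancel₀ (mul_ne_zero (neg_ne_zero.mpr hξ) (hD m)) ?_
      linear_combination (ξ' * a * ω ^ m.val - x * b) * hw' -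
        ω ^ m.val * (ξ' * a - x * b) * hv m -
        v (m - 1) * (ξ' * a - x * b) * (ξ' * a * ω ^ m.val - x * b) * e
  have hE : ξ' * a * ω ^ m.val - x * b ≠ 0 := by
    intro h0
    have := hv m
    rw [h0, mul_zero] at this
    exact mul_ne_zero (hvne m) (mul_ne_zero (neg_ne_zero.mpr hξ) (hD m)) this
  rw [div_mul_eq_mul_div, eq_div_iff hF]
  refine mul_right_cancel₀ hE ?_
  linear_combination (-(a * ω ^ m.val * (ξ' * a - x * b))) * hv m -
    ξ * (a * d - x ^ 2 * b * c) * key m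

end Site

/-! ### The T-Q relation -/

/-- Baxter T-Q relation on the spectral curve: if `φ` is a linear
functional on `⊗^Lℂ^N` with `φ∘T_{h⃗}(x) = Λ(x)·φ` for all `x`, and
`Q(p) := φ(|p⟩)`, then at every nondegenerate `p` with `τ₋(p)`, `τ₊(p)` nondegenerate,
`Λ(x)Q(p) = Δ₋(p)Q(τ₋p) + Δ₊(p)Q(τ₊p)`. -/
theorem baxter_TQ_relation_on_curve (M L : ℕ) [NeZero L] (hM : 1 ≤ M) (ω : ℂ)
    (hω : IsPrimitiveRoot ω (2 * M + 1)) (q : ℂ) (hq : q = ω ^ (M + 1))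
    (a b c d : ZMod L → ℂ)
    (φ : ((ZMod L → ZMod (2 * M + 1)) → ℂ) →ₗ[ℂ] ℂ) (Λ : ℂ → ℂ)
    (hφ : ∀ (x : ℂ) (w : (ZMod L → ZMod (2 * M + 1)) → ℂ),
      φ ((transfer (2 * M + 1) L ω (fun j => (a j, b j, c j, d j)) x).mulVec w) =
        Λ x * φ w)
    (x : ℂ) (ξ : ZMod L → ℂ)
    (hp : onCurve (2 * M + 1) L a b c d x ξ)
    (hnd : nondeg (2 * M + 1) L ω a b c d x ξ)
    (hndm : nondeg (2 * M + 1) L ω a b c d (q⁻¹ * x) (fun j => q⁻¹ * ξ j))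
    (hndp : nondeg (2 * M + 1) L ω a b c d (q * x) (fun j => q⁻¹ * ξ j))
    (v wm wp : ZMod L → ZMod (2 * M + 1) → ℂ)
    (hv : isBaxterFamily (2 * M + 1) L ω a b c d x ξ v)
    (hwm : isBaxterFamily (2 * M + 1) L ω a b c d (q⁻¹ * x) (fun j => q⁻¹ * ξ j) wm)
    (hwp : isBaxterFamily (2 * M + 1) L ω a b c d (q * x) (fun j => q⁻¹ * ξ j) wp) :
    Λ x * φ (baxVec (2 * M + 1) L v) =
      DeltaMinus L c d x ξ * φ (baxVec (2 * M + 1) L wm) +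
        DeltaPlus L a b c d x ξ * φ (baxVec (2 * M + 1) L wp) := by
  classical
  have hωN : ω ^ (2 * M + 1) = 1 := hω.pow_eq_one
  have hq2 : q ^ 2 = ω := by
    rw [hq, ← pow_mul, show (M + 1) * 2 = (2 * M + 1) + 1 by ring, pow_succ, hωN, one_mul]
  have hq0 : q ≠ 0 := by
    rw [hq]; exact pow_ne_zero _ (hω.ne_zero (by omega))
  -- the defining recursion, cleared of denominators
  have clear : ∀ (x : ℂ) (ξ : ZMod L → ℂ) (v : ZMod L → ZMod (2 * M + 1) → ℂ),
      nondeg (2 * M + 1) L ω a b c d x ξ → isBaxterFamily (2 * M + 1) L ω a b c d x ξ v →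
      ∀ j m, v j m * (-ξ j * (ξ (j + 1) * x * c j * ω ^ m.val - d j)) =
        v j (m - 1) * (ξ (j + 1) * a j * ω ^ m.val - x * b j) := by
    intro x ξ v hn hb j m
    have hne := mul_ne_zero (neg_ne_zero.mpr (hn j).1) ((hn j).2.2 m)
    rw [(hb j).2 m, mul_div_assoc', div_mul_cancel₀ _ hne]
  have hv' := clear _ _ _ hnd hv
  have hwm' := clear _ _ _ hndm hwm
  have hwp' := clear _ _ _ hndp hwp
  have hvne : ∀ j m, v j m ≠ 0 := fun j =>
    ne_zero_of_cyclic_rec (hv j).1 (hv j).2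
  -- products over `range L` along the cast are products over `ZMod L`
  have hcast : ∀ f : ZMod L → ℂ, ∏ j ∈ Finset.range L, f (j : ZMod L) = ∏ j, f j := by
    intro f
    refine Finset.prod_bij (fun j _ => (j : ZMod L)) (by simp) ?_ ?_ (by simp)
    · intro i hi j hj h
      rw [Finset.mem_range] at hi hj
      rw [← ZMod.val_cast_of_lt hi, ← ZMod.val_cast_of_lt hj, h]
    · intro j _
      exact ⟨j.val, by simpa using ZMod.val_lt j, by simp⟩
  have hnodup : ((List.range L).map (Nat.cast : ℕ → ZMod L)).Nodup := by
    refine List.Nodup.map_on ?_ List.nodup_range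
    intro i hi j hj h
    rw [List.mem_range] at hi hj
    rw [← ZMod.val_cast_of_lt hi, ← ZMod.val_cast_of_lt hj, h]
  have hall : Finset.univ \ ((List.range L).map (Nat.cast : ℕ → ZMod L)).toFinset = ∅ := by
    ext j
    simp only [Finset.mem_sdiff, Finset.mem_univ, List.mem_toFinset, List.mem_map, true_and,
      Finset.notMem_empty, iff_false, not_not]
    exact ⟨j.val, by simpa using ZMod.val_lt j, by simp⟩
  have hmono : mono (2 * M + 1) L ω (fun j => (a j, b j, c j, d j)) x =
      (((List.range L).map (Nat.cast : ℕ → ZMod L)).map fun j =>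
        (Lop (2 * M + 1) ω (a j, b j, c j, d j) x).map (emb (2 * M + 1) L j)).prod := by
    -- in `mono` the cast to `ℕ` is applied to the whole list, through the list monad
    rw [mono, ← List.map_coe_finRange_eq_range]
    simp only [List.pure_def, List.bind_eq_flatMap, List.map_map,
      ← List.map_eq_flatMap]
    rfl
  have main : (transfer (2 * M + 1) L ω (fun j => (a j, b j, c j, d j)) x).mulVec
      (baxVec (2 * M + 1) L v) =
      DeltaMinus L c d x ξ • baxVec (2 * M + 1) L wm +
        DeltaPlus L a b c d x ξ • baxVec (2 * M + 1) L wp := by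
    funext k
    rw [transfer, Matrix.add_mulVec, Pi.add_apply, hmono,
      list_prod_mulVec_baxVec _ _ (fun j => Lop (2 * M + 1) ω (a j, b j, c j, d j) x) _ _ hnodup,
      list_prod_mulVec_baxVec _ _ (fun j => Lop (2 * M + 1) ω (a j, b j, c j, d j) x) _ _ hnodup,
      hall, Finset.prod_empty, mul_one, mul_one, List.map_map]
    rw [trace_prod_of_gauge (fun j => gaugeA (ξ (j : ZMod L))) _
      (fun j : ℕ => (fun j : ZMod L => siteB (a j) (b j) (c j) (d j) x (ξ j) (ξ (j + 1))
        (ω ^ (k j).val) (v j (k j - 1)) (v j (k j))) (j : ZMod L)) L]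
    · rw [hcast fun j => siteB (a j) (b j) (c j) (d j) x (ξ j) (ξ (j + 1))
          (ω ^ (k j).val) (v j (k j - 1)) (v j (k j)) 0 0,
        hcast fun j => siteB (a j) (b j) (c j) (d j) x (ξ j) (ξ (j + 1))
          (ω ^ (k j).val) (v j (k j - 1)) (v j (k j)) 1 1]
      simp only [Pi.add_apply, Pi.smul_apply, smul_eq_mul, DeltaMinus, DeltaPlus, baxVec,
        ← Finset.prod_mul_distrib]
      congr 1
      · refine Finset.prod_congr rfl fun j _ => ?_
        exact siteB_zero_zero hq0 hq2 hωN (hv j).1 (hwm j).1 (hnd j).1 (hnd j).2.2 (hv' j)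
          (hwm' j) (k j)
      · refine Finset.prod_congr rfl fun j _ => ?_
        exact siteB_one_one hq0 hq2 hωN (hv j).1 (hwp j).1 (hvne j) (hnd j).1 (hnd j).2.1
          (hnd j).2.2 (hv' j) (hwp' j) (k j)
    · intro j
      simpa using gaugeA_mul_siteU (2 * M + 1) ω _ _ _ _ x _ _ _ _ (hv' (j : ZMod L) (k j))
    · intro j
      simp [siteB]
    · simp
    · simp [gaugeA, Matrix.det_fin_two]
  rw [← hφ, main, map_add, map_smul, map_smul, smul_eq_mul, smul_eq_mul]

end
end
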